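/- Value function of the unconstrained discrete-time single integrator: let S = C = EuclideanSpace ℝ (Fin 2), fix Δt > 0, dynamics f(x,u) = x + Δt • u, control constraint set 𝒰 = C (unconstrained), state constraint set 𝒳 = S (no obstacles), stage cost g(x,u) = ‖u‖·Δt (as an extended nonnegative real), and goal state x̂ = 0. Then the optimal cost-to-go equals the Euclidean distance to the origin: J*(x) = ‖x‖ for every x. (The infimum is attained, e.g., by the single-step control u₀ = -(1/Δt) • x, and the lower bound follows from the triangle inequality since the controls of any feasible sequence must sum, scaled by Δt, to -x.) -/

import Mathlib

/-! A step along `Δt • u` costs exactly its length, so by the triangle inequality the cost accrued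
so far plus the distance still to go to the goal `0` never decreases along a trajectory
(`norm_le_trajCost_add`). It starts at `‖x‖` and equals the total cost once the goal is reached,
which gives the lower bound. The single step `u₀ = -(Δt⁻¹ • x)` attains it. -/

open scoped ENNReal

/-- The trajectory induced by dynamics `f`, initial state `x`, and control sequence `u`:
`traj f x u 0 = x` and `traj f x u (t+1) = f (traj f x u t) (u t)`. -/
def traj {S C : Type*} (f : S → C → S) (x : S) (u : ℕ → C) : ℕ → S
  | 0 => x
  | t + 1 => f (traj f x u t) (u t)

/-- `u` (over horizon `n`) is a feasible control sequence from `x`: controls lie in `U`,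
the trajectory stays in `X`, and the trajectory reaches the goal `xhat` at time `n`. -/
def Feasible {S C : Type*} (f : S → C → S) (U : Set C) (X : Set S) (xhat : S)
    (x : S) (n : ℕ) (u : ℕ → C) : Prop :=
  (∀ t, t < n → u t ∈ U) ∧ (∀ t, t ≤ n → traj f x u t ∈ X) ∧ traj f x u n = xhat

/-- The cost of control sequence `u` over horizon `n` starting from `x`. -/
noncomputable def trajCost {S C : Type*} (f : S → C → S) (g : S → C → ℝ≥0∞)
    (x : S) (n : ℕ) (u : ℕ → C) : ℝ≥0∞ :=
  ∑ t ∈ Finset.range n, g (traj f x u t) (u t)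

/-- The optimal cost-to-go `J*(x)`: infimum of the cost over all horizons and all
feasible control sequences from `x` (equal to `∞` if none exists). -/
noncomputable def Jstar {S C : Type*} (f : S → C → S) (U : Set C) (X : Set S)
    (g : S → C → ℝ≥0∞) (xhat : S) (x : S) : ℝ≥0∞ :=
  ⨅ (n : ℕ) (u : ℕ → C) (_ : Feasible f U X xhat x n u), trajCost f g x n u

/-- The invariant behind the lower bound: cost so far plus distance still to go is at least `‖x‖`. -/
theorem norm_le_trajCost_add {E : Type*} [NormedAddCommGroup E] [NormedSpace ℝ E]
    {Δt : ℝ} (hΔt : 0 < Δt) (x : E) (u : ℕ → E) (n : ℕ) :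
    ENNReal.ofReal ‖x‖ ≤
      trajCost (fun x u : E => x + Δt • u) (fun _ u => ENNReal.ofReal (‖u‖ * Δt)) x n u
        + ENNReal.ofReal ‖traj (fun x u : E => x + Δt • u) x u n‖ := by
  induction n with
  | zero => simp [traj]
  | succ n ih =>
    refine ih.trans ?_
    simp only [trajCost, Finset.sum_range_succ, traj, add_assoc]
    gcongr
    rw [← ENNReal.ofReal_add (by positivity) (norm_nonneg _)]
    apply ENNReal.ofReal_le_ofReal
    set y := traj (fun x u : E => x + Δt • u) x u n
    have h := norm_sub_le (y + Δt • u n) (Δt • u n)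
    rw [add_sub_cancel_right, norm_smul, Real.norm_of_nonneg hΔt.le] at h
    linarith

/-- Value function of the unconstrained discrete-time single integrator in the plane:
with dynamics `f(x,u) = x + Δt • u`, no state or control constraints, stage cost
`g(x,u) = ‖u‖ · Δt`, and goal `x̂ = 0`, the optimal cost-to-go is `J*(x) = ‖x‖`. -/
theorem Jstar_single_integrator (Δt : ℝ) (hΔt : 0 < Δt)
    (x : EuclideanSpace ℝ (Fin 2)) :
    Jstar (fun (x : EuclideanSpace ℝ (Fin 2)) (u : EuclideanSpace ℝ (Fin 2)) => x + Δt • u)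
      (Set.univ : Set (EuclideanSpace ℝ (Fin 2)))
      (Set.univ : Set (EuclideanSpace ℝ (Fin 2)))
      (fun _ u => ENNReal.ofReal (‖u‖ * Δt))
      (0 : EuclideanSpace ℝ (Fin 2)) x = ENNReal.ofReal ‖x‖ := by
  apply le_antisymm
  · refine iInf_le_of_le 1 (iInf_le_of_le (fun _ => -(Δt⁻¹ • x)) (iInf_le_of_le ?_ ?_))
    · simp [Feasible, traj, smul_smul, hΔt.ne']
    · simp only [trajCost, Finset.sum_range_one, norm_neg, norm_smul, norm_inv,
        Real.norm_of_nonneg hΔt.le]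
      apply ENNReal.ofReal_le_ofReal
      field_simp
      exact le_rfl
  · refine le_iInf fun n => le_iInf fun u => le_iInf fun hu => ?_
    have h := norm_le_trajCost_add hΔt x u n
    rwa [hu.2.2, norm_zero, ENNReal.ofReal_zero, add_zero] at h
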